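/- arXiv:0909.0978 — 3 statements merged into one kernel-verified Lean document; each statement's English description precedes it below -/
import Mathlib

section
/- Let r > 0 and 0 < b < r be real numbers, set c = 2·√(r·b), and let D = {x + iy ∈ ℂ : x²/(r+b)² + y²/(r−b)² ≤ 1} be the closed ellipse with semi-axes r+b and r−b. Then for every function f : ℂ → ℂ holomorphic on an open set containing D, the mean of f over D with respect to two-dimensional Lebesgue measure equals a semicircle average on the segment [−c, c]: (1/(π·(r²−b²))) · ∫_D f dA = (1/(2π·r·b)) · ∫_{−c}^{c} f(x)·√(c² − x²) dx. -/
open MeasureTheory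

lemma mem_aux (r b : ℝ) (hb : 0 < b) (hbr : b < r) (t x y q : ℝ) (ht0 : 0 ≤ t) (ht : t ≤ 1)
    (hq : q = x^2 + y^2) (hq1 : q ≤ 1) (hq2 : b ≤ r * q) :
    (t * (x * (r + b / q)))^2 / (r+b)^2 + (t * (y * (r - b / q)))^2 / (r-b)^2 ≤ 1 := by
  have hr : 0 < r := hb.trans hbr
  have hq0 : 0 < q := by
    by_contra h
    nlinarith
  have key : (q-1)*(r^2*q-b^2) ≤ 0 := by
    apply mul_nonpos_of_nonpos_of_nonneg
    · linarith
    · nlinarith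
  have h1 : (r + b/q)^2 / (r+b)^2 ≤ 1 / q := by
    rw [div_le_div_iff₀ (by positivity) hq0]
    have : (r + b/q)^2 * q = (r*q+b)^2/q := by field_simp
    rw [this, div_le_iff₀ hq0]
    nlinarith
  have h2 : (r - b/q)^2 / (r-b)^2 ≤ 1 / q := by
    have : 0 < r - b := by linarith
    rw [div_le_div_iff₀ (by positivity) hq0]
    have : (r - b/q)^2 * q = (r*q-b)^2/q := by field_simp
    rw [this, div_le_iff₀ hq0]
    nlinarith
  calc _ = t^2 * (x^2 * ((r + b/q)^2 / (r+b)^2) + y^2 * ((r - b/q)^2 / (r-b)^2)) := by ring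
    _ ≤ t^2 * (x^2 * (1/q) + y^2 * (1/q)) := by gcongr
    _ = t^2 := by rw [← add_mul, ← hq]; field_simp
    _ ≤ 1 := by nlinarith

/-- points `t (r w + b / w)` lie in the ellipse -/
lemma mem_aux2 (r b : ℝ) (hb : 0 < b) (hbr : b < r) (t : ℝ) (ht0 : 0 ≤ t) (ht : t ≤ 1) (w : ℂ)
    (hw1 : ‖w‖ ≤ 1) (hw2 : b ≤ r * ‖w‖^2) :
    (t * (r * w + b * w⁻¹) : ℂ) ∈
      {z : ℂ | z.re ^ 2 / (r + b) ^ 2 + z.im ^ 2 / (r - b) ^ 2 ≤ 1} := by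
  have := mem_aux r b hb hbr t w.re w.im (Complex.normSq w) ht0 ht
    (by rw [Complex.normSq_apply]; ring)
    (by rw [Complex.normSq_eq_norm_sq]; nlinarith [norm_nonneg w])
    (by rw [Complex.normSq_eq_norm_sq]; exact hw2)
  simp only [Set.mem_ofPred_eq]
  convert this using 3
  · congr 1
    simp [Complex.inv_re]
    left; ring
  · congr 1
    simp [Complex.inv_im]
    left; ring

lemma circ (G : ℂ → ℂ) (R : ℝ) (hR : 0 < R) :
    (∮ z in C(0, R), (z - 0)⁻¹ • G z) = Complex.I * ∫ θ in (0:ℝ)..(2*Real.pi), G (circleMap 0 R θ) := by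
  rw [circleIntegral, ← intervalIntegral.integral_const_mul]
  congr 1
  ext θ
  have : circleMap 0 R θ ≠ 0 := by simp [circleMap, hR.ne']
  simp only [deriv_circleMap, sub_zero, smul_eq_mul]
  field_simp

lemma inner_eq (r b : ℝ) (hb : 0 < b) (hbr : b < r) (c : ℝ) (hc : c = 2 * Real.sqrt (r * b))
    (D : Set ℂ)
    (hD : D = {z : ℂ | z.re ^ 2 / (r + b) ^ 2 + z.im ^ 2 / (r - b) ^ 2 ≤ 1})
    (f : ℂ → ℂ) (U : Set ℂ) (hU : IsOpen U) (hDU : D ⊆ U)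
    (hf : DifferentiableOn ℂ f U) (t : ℝ) (ht0 : 0 ≤ t) (ht : t ≤ 1) :
    ∫ θ in (0:ℝ)..(2*Real.pi), f (r * circleMap 0 t θ + b * (starRingEnd ℂ) (circleMap 0 t θ)) =
    ∫ θ in (0:ℝ)..(2*Real.pi), f (c * (circleMap 0 t θ).re) := by
  have hr : 0 < r := hb.trans hbr
  set s : ℝ := Real.sqrt (b / r) with hs
  have hs0 : 0 < s := Real.sqrt_pos.2 (by positivity)
  have hs2 : s ^ 2 = b / r := Real.sq_sqrt (by positivity)
  have hs1 : s ≤ 1 := by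
    rw [hs, Real.sqrt_le_iff, one_pow, div_le_one hr]; exact ⟨zero_le_one, hbr.le⟩
  have hcs : c = 2 * r * s := by
    rw [hc, hs, show r * b = r^2 * (b/r) by field_simp, Real.sqrt_mul (by positivity),
      Real.sqrt_sq hr.le]; ring
  have hbs : b = r * s^2 := by rw [hs2]; field_simp
  set G : ℂ → ℂ := fun w => f (t * (r * w + b * w⁻¹)) with hG
  have hmem : ∀ w ∈ Metric.closedBall (0:ℂ) 1 \ Metric.ball 0 s, (t * (r * w + b * w⁻¹) : ℂ) ∈ U ∧ w ≠ 0 := by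
    intro w hw
    simp only [Set.mem_sdiff, Metric.mem_closedBall, dist_zero_right, Metric.mem_ball, not_lt] at hw
    refine ⟨hDU ?_, ?_⟩
    · rw [hD]
      apply mem_aux2 r b hb hbr t ht0 ht w hw.1
      have : s^2 ≤ ‖w‖^2 := by gcongr; exact hw.2
      rw [hbs]; gcongr
    · rintro rfl
      simp at hw
      linarith
  have hdiff : ∀ w ∈ Metric.closedBall (0:ℂ) 1 \ Metric.ball 0 s, DifferentiableAt ℂ G w := by
    intro w hw
    obtain ⟨h1, h2⟩ := hmem w hw
    have h3 := hf.differentiableAt (hU.mem_nhds h1)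
    have h4 : DifferentiableAt ℂ (fun w : ℂ => (t * (r * w + b * w⁻¹) : ℂ)) w := by
      fun_prop (disch := assumption)
    exact DifferentiableAt.comp w h3 h4
  have main := Complex.circleIntegral_sub_center_inv_smul_eq_of_differentiable_on_annulus_off_countable
    (c := 0) hs0 hs1 (f := G) (s := ∅) Set.countable_empty
    (fun w hw => (hdiff w hw).continuousAt.continuousWithinAt)
    (fun w hw => hdiff w ⟨Metric.ball_subset_closedBall hw.1.1,
      fun h => hw.1.2 (Metric.ball_subset_closedBall h)⟩)
  rw [circ G 1 one_pos, circ G s hs0] at main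
  have main := mul_left_cancel₀ Complex.I_ne_zero main
  have hexp : ∀ θ : ℝ, (starRingEnd ℂ) (Complex.exp (θ * Complex.I)) = (Complex.exp (θ * Complex.I))⁻¹ := by
    intro θ
    rw [← Complex.exp_conj, ← Complex.exp_neg]
    simp
  convert main using 3 with θ θ
  · simp only [hG, circleMap, zero_add, map_mul, Complex.conj_ofReal, hexp]
    congr 1
    push_cast
    ring
  · simp only [hG, circleMap, zero_add]
    congr 1
    have h0 : (s:ℂ) ≠ 0 := by exact_mod_cast hs0.ne'
    have : ((t * Complex.exp (θ * Complex.I)).re : ℂ) =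
       t * ((Complex.exp (θ * Complex.I)) + (Complex.exp (θ * Complex.I))⁻¹) / 2 := by
      rw [← hexp, Complex.add_conj, Complex.re_ofReal_mul]
      push_cast; ring
    rw [this, hcs, hbs]
    push_cast
    field_simp

lemma disk_polar (h : ℂ → ℂ) (hh : ContinuousOn h (Metric.closedBall 0 1)) :
    ∫ z in Metric.closedBall (0:ℂ) 1, h z =
      ∫ t in Set.Ioc (0:ℝ) 1, t • ∫ θ in (0:ℝ)..(2*Real.pi), h (circleMap 0 t θ) := by
  have hcm : ∀ p : ℝ × ℝ, Complex.polarCoord.symm p = circleMap 0 p.1 p.2 := by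
    intro p
    simp [circleMap, Complex.exp_mul_I]
  rw [← integral_indicator Metric.isClosed_closedBall.measurableSet,
    ← Complex.integral_comp_polarCoord_symm]
  have e1 : ∫ p in polarCoord.target, p.1 • (Metric.closedBall (0:ℂ) 1).indicator h
        (Complex.polarCoord.symm p) =
      ∫ p in Set.Ioc (0:ℝ) 1 ×ˢ Set.Ioo (-Real.pi) Real.pi, p.1 • h (circleMap 0 p.1 p.2) := by
    have hm : MeasurableSet (Set.Ioc (0:ℝ) 1 ×ˢ Set.Ioo (-Real.pi) Real.pi) :=
      measurableSet_Ioc.prod measurableSet_Ioo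
    have hm2 : MeasurableSet (Set.Ioi (0:ℝ) ×ˢ Set.Ioo (-Real.pi) Real.pi) :=
      measurableSet_Ioi.prod measurableSet_Ioo
    rw [polarCoord_target, ← integral_indicator hm, ← integral_indicator hm2]
    congr 1
    ext p
    simp only [Set.indicator_apply, hcm, Set.mem_prod, Set.mem_Ioi, Set.mem_Ioc]
    by_cases h0 : 0 < p.1 <;> by_cases h1 : p.1 ≤ 1 <;>
      by_cases h2 : p.2 ∈ Set.Ioo (-Real.pi) Real.pi <;> simp [h0, h1, h2, abs_of_pos]
  have hcont : Continuous (fun p : ℝ × ℝ => circleMap 0 p.1 p.2) := by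
    unfold circleMap; fun_prop
  have e2 : IntegrableOn (fun p : ℝ × ℝ => p.1 • h (circleMap 0 p.1 p.2))
      (Set.Ioc (0:ℝ) 1 ×ˢ Set.Ioo (-Real.pi) Real.pi) := by
    have : ContinuousOn (fun p : ℝ × ℝ => p.1 • h (circleMap 0 p.1 p.2))
        (Set.Icc (0:ℝ) 1 ×ˢ Set.Icc (-Real.pi) Real.pi) := by
      apply continuousOn_fst.smul
      apply hh.comp hcont.continuousOn
      rintro ⟨x, y⟩ hp
      simp only [Set.mem_prod, Set.mem_Icc] at hp
      simp [abs_le]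
      constructor <;> linarith
    exact (this.integrableOn_compact (isCompact_Icc.prod isCompact_Icc)).mono_set
      (Set.prod_mono Set.Ioc_subset_Icc_self Set.Ioo_subset_Icc_self)
  rw [e1]
  rw [Measure.volume_eq_prod] at e2 ⊢
  rw [setIntegral_prod _ e2]
  apply setIntegral_congr_fun measurableSet_Ioc
  intro t ht
  simp only
  rw [integral_smul]
  congr 1
  rw [← integral_Ioc_eq_integral_Ioo, ← intervalIntegral.integral_of_le (by linarith [Real.pi_pos])]
  have hper : Function.Periodic (fun θ => h (circleMap 0 t θ)) (2 * Real.pi) := by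
    intro θ; simp only [periodic_circleMap 0 t θ]
  have := hper.intervalIntegral_add_eq (-Real.pi) 0
  rw [zero_add] at this
  rw [← this]
  congr 1; ring

lemma disk_strip (g : ℝ → ℂ) (hg : ContinuousOn g (Set.Icc (-1) 1)) :
    ∫ z in Metric.closedBall (0:ℂ) 1, g z.re =
      2 * ∫ x in (-1:ℝ)..1, g x * (Real.sqrt (1 - x^2) : ℝ) := by
  have hm : MeasurableSet (Metric.closedBall (0:ℂ) 1) := Metric.isClosed_closedBall.measurableSet
  have hint : IntegrableOn (fun z : ℂ => g z.re) (Metric.closedBall (0:ℂ) 1) := by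
    apply ContinuousOn.integrableOn_compact (isCompact_closedBall _ _)
    apply hg.comp Complex.continuous_re.continuousOn
    intro z hz
    have := (Complex.abs_re_le_norm z).trans (by simpa using hz)
    exact abs_le.1 this
  rw [← integrable_indicator_iff hm] at hint
  rw [← integral_indicator hm]
  have hint2 := (Complex.volume_preserving_equiv_real_prod.symm).integrable_comp_emb
    Complex.measurableEquivRealProd.symm.measurableEmbedding |>.2 hint
  rw [← (Complex.volume_preserving_equiv_real_prod.symm).integral_comp
    Complex.measurableEquivRealProd.symm.measurableEmbedding]
  rw [Measure.volume_eq_prod] at hint2 ⊢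
  have := integral_prod _ hint2
  simp only [Function.comp_def] at this
  rw [this, ← intervalIntegral.integral_const_mul, intervalIntegral.integral_of_le (by norm_num),
    ← integral_Icc_eq_integral_Ioc, ← integral_indicator measurableSet_Icc]
  congr 1
  ext x
  have key : ∀ y : ℝ, Complex.measurableEquivRealProd.symm (x, y) ∈ Metric.closedBall (0:ℂ) 1 ↔
      x^2 + y^2 ≤ 1 := by
    intro y
    rw [mem_closedBall_zero_iff, ← sq_le_one_iff₀ (norm_nonneg _), ← Complex.normSq_eq_norm_sq,
      Complex.normSq_apply]
    simp [Complex.measurableEquivRealProd_symm_apply, pow_two]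
  by_cases hx : x ∈ Set.Icc (-1:ℝ) 1
  · have hx2 : 0 ≤ 1 - x^2 := by nlinarith [hx.1, hx.2]
    have : ∀ y : ℝ, (Metric.closedBall (0:ℂ) 1).indicator (fun z : ℂ => g z.re)
        (Complex.measurableEquivRealProd.symm (x, y)) =
        (Set.Icc (-Real.sqrt (1-x^2)) (Real.sqrt (1-x^2))).indicator (fun _ => g x) y := by
      intro y
      have hiff : y ∈ Set.Icc (-Real.sqrt (1-x^2)) (Real.sqrt (1-x^2)) ↔ x^2 + y^2 ≤ 1 := by
        rw [Set.mem_Icc, ← abs_le, Real.le_sqrt (abs_nonneg y) hx2, sq_abs, le_sub_iff_add_le,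
          add_comm]
      by_cases hy : x^2 + y^2 ≤ 1
      · rw [Set.indicator_of_mem ((key y).2 hy), Set.indicator_of_mem (hiff.2 hy)]
        simp [Complex.measurableEquivRealProd_symm_apply]
      · rw [Set.indicator_of_notMem (fun h => hy ((key y).1 h)),
          Set.indicator_of_notMem (fun h => hy (hiff.1 h))]
    simp only [this, Set.indicator_of_mem hx]
    rw [integral_indicator measurableSet_Icc, setIntegral_const]
    simp [measureReal_def, Real.volume_Icc, ENNReal.toReal_ofReal]
    ring
  · rw [Set.indicator_of_notMem hx]
    rw [integral_eq_zero_of_ae]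
    filter_upwards with y
    rw [Set.indicator_of_notMem]
    · rfl
    · rw [key]
      intro h
      apply hx
      rw [Set.mem_Icc, ← abs_le, ← sq_le_one_iff_abs_le_one]
      nlinarith [sq_nonneg y]

lemma ellipse_lin (r b : ℝ) (hb : 0 < b) (hbr : b < r) (f : ℂ → ℂ) :
    ∫ z in {z : ℂ | z.re ^ 2 / (r + b) ^ 2 + z.im ^ 2 / (r - b) ^ 2 ≤ 1}, f z =
      ((r^2 - b^2 : ℝ) : ℂ) *
        ∫ w in Metric.closedBall (0:ℂ) 1, f (r * w + b * (starRingEnd ℂ) w) := by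
  have h1 : 0 < r - b := by linarith
  have h2 : 0 < r + b := by linarith
  let L : ℂ →L[ℝ] ℂ := r • ContinuousLinearMap.id ℝ ℂ + b • (Complex.conjCLE : ℂ →L[ℝ] ℂ)
  have hL : ∀ w, L w = r * w + b * (starRingEnd ℂ) w := by intro w; simp [L]
  have hre : ∀ w, (L w).re = (r + b) * w.re := by intro w; simp [hL]; ring
  have him : ∀ w, (L w).im = (r - b) * w.im := by intro w; simp [hL]; ring
  have hdet : L.det = r^2 - b^2 := by
    rw [ContinuousLinearMap.det, ← LinearMap.det_toMatrix Complex.basisOneI, Matrix.det_fin_two]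
    simp [LinearMap.toMatrix_apply, hL]
    ring
  have himg : L '' Metric.closedBall (0:ℂ) 1 =
      {z : ℂ | z.re ^ 2 / (r + b) ^ 2 + z.im ^ 2 / (r - b) ^ 2 ≤ 1} := by
    have key : ∀ w : ℂ, w ∈ Metric.closedBall (0:ℂ) 1 ↔ w.re^2 + w.im^2 ≤ 1 := by
      intro w
      rw [mem_closedBall_zero_iff, ← sq_le_one_iff₀ (norm_nonneg _), ← Complex.normSq_eq_norm_sq,
        Complex.normSq_apply, pow_two, pow_two]
    ext z
    constructor
    · rintro ⟨w, hw, rfl⟩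
      rw [key] at hw
      simp only [Set.mem_ofPred_eq, hre, him]
      convert hw using 1
      field_simp
    · intro hz
      refine ⟨⟨z.re / (r+b), z.im / (r-b)⟩, ?_, ?_⟩
      · rw [key]
        rw [Set.mem_ofPred_eq] at hz
        simpa only [div_pow] using hz
      · apply Complex.ext
        · rw [hre]; field_simp
        · rw [him]; field_simp
  have hinj : Function.Injective L := by
    intro z w h
    apply Complex.ext
    · have := congrArg Complex.re h
      rw [hre, hre] at this
      exact mul_left_cancel₀ h2.ne' this
    · have := congrArg Complex.im h
      rw [him, him] at this
      exact mul_left_cancel₀ h1.ne' this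
  rw [← himg, integral_image_eq_integral_abs_det_fderiv_smul volume
    Metric.isClosed_closedBall.measurableSet (fun x _ => L.hasFDerivWithinAt) hinj.injOn,
    ← integral_const_mul]
  have : |L.det| = r^2 - b^2 := by rw [hdet, abs_of_pos]; nlinarith
  simp only [this, hL, Complex.real_smul]

theorem stmt_10 (r b : ℝ) (hb : 0 < b) (hbr : b < r)
    (c : ℝ) (hc : c = 2 * Real.sqrt (r * b))
    (D : Set ℂ)
    (hD : D = {z : ℂ | z.re ^ 2 / (r + b) ^ 2 + z.im ^ 2 / (r - b) ^ 2 ≤ 1})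
    (f : ℂ → ℂ) (U : Set ℂ) (hU : IsOpen U) (hDU : D ⊆ U)
    (hf : DifferentiableOn ℂ f U) :
    ((Real.pi * (r ^ 2 - b ^ 2) : ℝ) : ℂ)⁻¹ * ∫ z in D, f z
      = ((2 * Real.pi * r * b : ℝ) : ℂ)⁻¹ *
          ∫ x in (-c)..c, f (x : ℂ) * ((Real.sqrt (c ^ 2 - x ^ 2) : ℝ) : ℂ) := by
  have hr : 0 < r := hb.trans hbr
  have hc0 : 0 < c := by rw [hc]; positivity
  have hc2 : c^2 = 4 * (r * b) := by rw [hc, mul_pow, Real.sq_sqrt (by positivity)]; ring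
  have hfc : ContinuousOn f U := hf.continuousOn
  have hcont1 : ContinuousOn (fun w : ℂ => f (r * w + b * (starRingEnd ℂ) w))
      (Metric.closedBall 0 1) := by
    refine hfc.comp (Continuous.continuousOn ?_) ?_
    · exact (continuous_const.mul continuous_id).add (continuous_const.mul Complex.continuous_conj)
    · intro w hw
      apply hDU
      have hw' : w.re^2 + w.im^2 ≤ 1 := by
        rw [mem_closedBall_zero_iff, ← sq_le_one_iff₀ (norm_nonneg _), ← Complex.normSq_eq_norm_sq,
          Complex.normSq_apply] at hw
        nlinarith
      have h1 : 0 < r - b := by linarith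
      have h2 : 0 < r + b := by linarith
      rw [hD, Set.mem_ofPred_eq]
      convert hw' using 1
      simp
      field_simp
      ring
  have hgc : ContinuousOn (fun x : ℝ => f ((c * x : ℝ) : ℂ)) (Set.Icc (-1) 1) := by
    refine hfc.comp (Continuous.continuousOn (by fun_prop)) ?_
    intro x hx
    apply hDU
    rw [hD, Set.mem_ofPred_eq]
    simp only [Complex.ofReal_re, Complex.ofReal_im]
    have hx2 : x^2 ≤ 1 := by nlinarith [hx.1, hx.2]
    have : (c*x)^2 / (r+b)^2 ≤ 1 := by
      rw [div_le_one (by positivity), mul_pow, hc2]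
      nlinarith [sq_nonneg (r-b), mul_pos hr hb]
    simpa using this
  have hcont2 : ContinuousOn (fun w : ℂ => f ((c * w.re : ℝ) : ℂ)) (Metric.closedBall 0 1) := by
    refine hgc.comp Complex.continuous_re.continuousOn ?_
    intro z hz
    have := (Complex.abs_re_le_norm z).trans (by simpa using hz)
    exact abs_le.1 this
  have hmid : ∫ w in Metric.closedBall (0:ℂ) 1, f (r * w + b * (starRingEnd ℂ) w) =
      ∫ w in Metric.closedBall (0:ℂ) 1, f ((c * w.re : ℝ) : ℂ) := by
    rw [disk_polar _ hcont1, disk_polar _ hcont2]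
    apply setIntegral_congr_fun measurableSet_Ioc
    intro t ht
    simp only
    rw [inner_eq r b hb hbr c hc D hD f U hU hDU hf t ht.1.le ht.2]
    simp only [Complex.ofReal_mul]
  have hscale : ∫ x in (-c)..c, f (x : ℂ) * ((Real.sqrt (c ^ 2 - x ^ 2) : ℝ) : ℂ) =
      (c:ℂ)^2 * ∫ x in (-1:ℝ)..1, f ((c * x : ℝ) : ℂ) * (Real.sqrt (1 - x^2) : ℝ) := by
    have := intervalIntegral.smul_integral_comp_mul_left (a := -1) (b := 1)
      (fun x : ℝ => f (x : ℂ) * ((Real.sqrt (c ^ 2 - x ^ 2) : ℝ) : ℂ)) c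
    rw [mul_neg, mul_one] at this
    rw [← this, Complex.real_smul, pow_two (c : ℂ), mul_assoc]
    congr 1
    rw [← intervalIntegral.integral_const_mul]
    apply intervalIntegral.integral_congr
    intro x _
    simp only
    rw [show c^2 - (c*x)^2 = c^2 * (1 - x^2) by ring, Real.sqrt_mul (by positivity),
      Real.sqrt_sq hc0.le]
    push_cast
    ring
  rw [hscale, hD, ellipse_lin r b hb hbr f, hmid,
    disk_strip (fun x : ℝ => f ((c * x : ℝ) : ℂ)) hgc]
  have hpi : (Real.pi : ℂ) ≠ 0 := by exact_mod_cast Real.pi_ne_zero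
  have hr' : (r : ℂ) ≠ 0 := by exact_mod_cast hr.ne'
  have hb' : (b : ℂ) ≠ 0 := by exact_mod_cast hb.ne'
  have hrb : (r : ℂ)^2 - (b:ℂ)^2 ≠ 0 := by
    have : r^2 - b^2 ≠ 0 := by nlinarith
    exact_mod_cast this
  have hc2' : (c : ℂ)^2 = 4 * (r * b) := by exact_mod_cast hc2
  rw [hc2']
  generalize (∫ x in (-1:ℝ)..1, f ((c * x : ℝ) : ℂ) * (Real.sqrt (1 - x^2) : ℝ)) = S
  push_cast
  field_simp
  ring
end

section
/- Let r > 0 and 0 < b < r be real numbers, let D = {x + iy ∈ ℂ : x²/(r+b)² + y²/(r−b)² ≤ 1} be the closed ellipse with semi-axes r+b and r−b, and let γ(θ) = (r+b)·cos θ + i·(r−b)·sin θ for θ ∈ [0, 2π] parametrize its boundary. Then for every function f : ℂ → ℂ holomorphic on an open set containing D, ∫_D f dA = (1/(2i)) · ∫₀^{2π} f(γ(θ)) · conj(γ(θ)) · γ′(θ) dθ; that is, the area integral of f over D equals the contour integral (1/(2i)) ∮_{∂D} f(z)·conj(z) dz. -/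
open MeasureTheory

lemma greenA (f : ℂ → ℂ) (U : Set ℂ) (hU : IsOpen U) (hf : DifferentiableOn ℂ f U)
    (γ γ' : ℝ → ℂ) (hγ : ∀ θ, HasDerivAt γ (γ' θ) θ) (hγ' : Continuous γ') (a b : ℝ) (hab : a ≤ b)
    (hp : γ a = γ b) (c : ℂ)
    (hc : ∀ θ, γ' θ * (starRingEnd ℂ) (γ θ) - γ θ * (starRingEnd ℂ) (γ' θ) = c)
    (hm : ∀ t : ℝ, 0 ≤ t → t ≤ 1 → ∀ θ, (t : ℂ) * γ θ ∈ U) :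
    ∫ θ in a..b, f (γ θ) * (starRingEnd ℂ) (γ θ) * γ' θ =
      c * ∫ p in Set.Ioc (0:ℝ) 1 ×ˢ Set.Ioo a b, (p.1 : ℂ) * f (p.1 * γ p.2) := by
  have hγc : Continuous γ := continuous_iff_continuousAt.2 fun θ => (hγ θ).continuousAt
  have hd : DifferentiableOn ℂ (deriv f) U := hf.deriv hU
  have hmaps : Set.MapsTo (fun p : ℝ × ℝ => (p.1 : ℂ) * γ p.2) (Set.Icc 0 1 ×ˢ Set.Icc a b) U :=
    fun p hp => hm p.1 hp.1.1 hp.1.2 p.2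
  have hbase : Continuous (fun p : ℝ × ℝ => (p.1 : ℂ) * γ p.2) := by fun_prop
  have c1 : ContinuousOn (fun p : ℝ × ℝ => f (p.1 * γ p.2)) (Set.Icc 0 1 ×ˢ Set.Icc a b) :=
    hf.continuousOn.comp hbase.continuousOn hmaps
  have c2 : ContinuousOn (fun p : ℝ × ℝ => deriv f (p.1 * γ p.2)) (Set.Icc 0 1 ×ˢ Set.Icc a b) :=
    hd.continuousOn.comp hbase.continuousOn hmaps
  have hfd : ∀ z ∈ U, HasDerivAt f (deriv f z) z := fun z hz =>
    (hf.differentiableAt (hU.mem_nhds hz)).hasDerivAt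
  have hK : IsCompact (Set.Icc (0:ℝ) 1 ×ˢ Set.Icc a b) := isCompact_Icc.prod isCompact_Icc
  have hsub : Set.Ioc (0:ℝ) 1 ×ˢ Set.Ioc a b ⊆ Set.Icc (0:ℝ) 1 ×ˢ Set.Icc a b :=
    Set.prod_mono Set.Ioc_subset_Icc_self Set.Ioc_subset_Icc_self
  have hcg : Continuous (fun θ => (starRingEnd ℂ) (γ θ)) := Complex.continuous_conj.comp hγc
  have hcg' : Continuous (fun θ => (starRingEnd ℂ) (γ' θ)) := Complex.continuous_conj.comp hγ'
  have hcgd : ∀ θ, HasDerivAt (fun θ => (starRingEnd ℂ) (γ θ)) ((starRingEnd ℂ) (γ' θ)) θ :=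
    fun θ => (hγ θ).star
  -- the two-variable integrand
  let H : ℝ × ℝ → ℂ := fun p => (2 * p.1 * f (p.1 * γ p.2)
    + p.1 ^ 2 * (deriv f (p.1 * γ p.2) * γ p.2)) * ((starRingEnd ℂ) (γ p.2) * γ' p.2)
  let G : ℝ × ℝ → ℂ := fun p => (p.1 : ℂ) * f (p.1 * γ p.2)
  have f1 : Continuous (fun p : ℝ × ℝ => γ p.2) := hγc.comp continuous_snd
  have f2 : Continuous (fun p : ℝ × ℝ => (starRingEnd ℂ) (γ p.2)) := hcg.comp continuous_snd
  have f3 : Continuous (fun p : ℝ × ℝ => γ' p.2) := hγ'.comp continuous_snd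
  have f5 : Continuous (fun p : ℝ × ℝ => (p.1 : ℂ)) := by fun_prop
  have hHc : ContinuousOn H (Set.Icc 0 1 ×ˢ Set.Icc a b) :=
    ((((continuous_const.mul f5).continuousOn).mul c1).add
      ((f5.pow 2).continuousOn.mul (c2.mul f1.continuousOn))).mul (f2.mul f3).continuousOn
  have hGc : ContinuousOn G (Set.Icc 0 1 ×ˢ Set.Icc a b) := f5.continuousOn.mul c1
  have hHi : IntegrableOn H (Set.Ioc 0 1 ×ˢ Set.Ioc a b) (volume.prod volume) :=
    (hHc.integrableOn_compact hK).mono_set hsub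
  have hGi : IntegrableOn G (Set.Ioc 0 1 ×ˢ Set.Ioc a b) (volume.prod volume) :=
    (hGc.integrableOn_compact hK).mono_set hsub
  -- radial integration
  have s1 : ∀ θ ∈ Set.Ioc a b, ∫ t in Set.Ioc (0:ℝ) 1, H (t, θ)
      = f (γ θ) * (starRingEnd ℂ) (γ θ) * γ' θ := by
    intro θ hθ
    rw [← intervalIntegral.integral_of_le zero_le_one]
    rw [intervalIntegral.integral_eq_sub_of_hasDerivAt
      (f := fun t : ℝ => (t:ℂ)^2 * f (t * γ θ) * ((starRingEnd ℂ) (γ θ) * γ' θ))]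
    · simp; ring
    · intro t ht
      rw [Set.uIcc_of_le zero_le_one] at ht
      have h0 : HasDerivAt (fun t : ℝ => (t : ℂ)) 1 t := Complex.ofRealCLM.hasDerivAt
      have h1 : HasDerivAt (fun t : ℝ => f (t * γ θ)) (deriv f (t * γ θ) * (1 * γ θ)) t :=
        (hfd _ (hm t ht.1 ht.2 θ)).comp t (h0.mul_const (γ θ))
      convert! ((h0.pow 2).mul h1).mul_const ((starRingEnd ℂ) (γ θ) * γ' θ) using 1
      simp only [H, one_mul, Pi.pow_apply]
      push_cast
      ring
    · refine ContinuousOn.intervalIntegrable ?_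
      rw [Set.uIcc_of_le zero_le_one]
      exact hHc.comp (f := fun t : ℝ => (t, θ)) (by fun_prop)
        (fun t ht => ⟨ht, Set.Ioc_subset_Icc_self hθ⟩)
  -- angular integration
  have s2 : ∀ t ∈ Set.Ioc (0:ℝ) 1, ∫ θ in Set.Ioc a b, H (t, θ)
      = c * ∫ θ in Set.Ioc a b, G (t, θ) := by
    intro t ht
    have ht' : t ∈ Set.Icc (0:ℝ) 1 := Set.Ioc_subset_Icc_self ht
    have hHt : IntervalIntegrable (fun θ => H (t, θ)) volume a b := by
      refine ContinuousOn.intervalIntegrable ?_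
      rw [Set.uIcc_of_le hab]
      exact hHc.comp (f := fun θ : ℝ => (t, θ)) (by fun_prop) (fun θ hθ => ⟨ht', hθ⟩)
    have hGt : IntervalIntegrable (fun θ => G (t, θ)) volume a b := by
      refine ContinuousOn.intervalIntegrable ?_
      rw [Set.uIcc_of_le hab]
      exact hGc.comp (f := fun θ : ℝ => (t, θ)) (by fun_prop) (fun θ hθ => ⟨ht', hθ⟩)
    rw [← intervalIntegral.integral_of_le hab, ← intervalIntegral.integral_of_le hab,
      ← intervalIntegral.integral_const_mul, ← sub_eq_zero,
      ← intervalIntegral.integral_sub hHt (hGt.const_mul c)]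
    rw [intervalIntegral.integral_eq_sub_of_hasDerivAt
      (f := fun θ : ℝ => (t:ℂ) * (f (t * γ θ) * (γ θ * (starRingEnd ℂ) (γ θ))))]
    · rw [hp, sub_self]
    · intro θ _
      have h1 : HasDerivAt (fun θ : ℝ => f (t * γ θ)) (deriv f (t * γ θ) * (t * γ' θ)) θ :=
        (hfd _ (hm t ht'.1 ht'.2 θ)).comp θ ((hγ θ).const_mul (t:ℂ))
      convert! (h1.mul ((hγ θ).mul (hcgd θ))).const_mul (t:ℂ) using 1
      simp only [H, G, ← hc θ, Pi.mul_apply]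
      ring
    · exact hHt.sub (hGt.const_mul c)
  calc ∫ θ in a..b, f (γ θ) * (starRingEnd ℂ) (γ θ) * γ' θ
      = ∫ θ in Set.Ioc a b, ∫ t in Set.Ioc (0:ℝ) 1, H (t, θ) := by
        rw [intervalIntegral.integral_of_le hab]
        exact (setIntegral_congr_fun measurableSet_Ioc s1).symm
    _ = ∫ t in Set.Ioc (0:ℝ) 1, ∫ θ in Set.Ioc a b, H (t, θ) := by
        rw [integral_integral_swap]
        rw [IntegrableOn, ← Measure.prod_restrict] at hHi
        exact hHi.swap
    _ = ∫ t in Set.Ioc (0:ℝ) 1, c * ∫ θ in Set.Ioc a b, G (t, θ) :=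
        setIntegral_congr_fun measurableSet_Ioc s2
    _ = c * ∫ p in Set.Ioc (0:ℝ) 1 ×ˢ Set.Ioc a b, G p := by
        rw [integral_const_mul, Measure.volume_eq_prod, setIntegral_prod _ hGi]
    _ = _ := by
        congr 1
        refine setIntegral_congr_set ?_
        rw [Measure.volume_eq_prod]
        exact Measure.set_prod_ae_eq (Filter.EventuallyEq.refl _ _) Ioo_ae_eq_Ioc.symm

lemma areaB (r b : ℝ) (hb : 0 < b) (hbr : b < r) (f : ℂ → ℂ) :
    ∫ z in {z : ℂ | z.re ^ 2 / (r + b) ^ 2 + z.im ^ 2 / (r - b) ^ 2 ≤ 1}, f z =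
    ((r ^ 2 - b ^ 2 : ℝ) : ℂ) * ∫ p in Set.Ioc (0:ℝ) 1 ×ˢ Set.Ioo (-Real.pi) Real.pi, (p.1 : ℂ) *
      f (p.1 * (((r + b) * Real.cos p.2 : ℝ) + Complex.I * ((r - b) * Real.sin p.2 : ℝ))) := by
  have h1 : 0 < r + b := by linarith
  have h2 : 0 < r - b := by linarith
  let L : ℂ →L[ℝ] ℂ := r • ContinuousLinearMap.id ℝ ℂ + b • (Complex.conjCLE : ℂ →L[ℝ] ℂ)
  have hre : ∀ z, (L z).re = (r + b) * z.re := by intro z; simp [L]; ring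
  have him : ∀ z, (L z).im = (r - b) * z.im := by intro z; simp [L]; ring
  have hdet : L.det = r ^ 2 - b ^ 2 := by
    rw [ContinuousLinearMap.det, ← LinearMap.det_toMatrix Complex.basisOneI, Matrix.det_fin_two]
    simp [LinearMap.toMatrix_apply, hre, him]
    ring
  have himg : {z : ℂ | z.re ^ 2 / (r + b) ^ 2 + z.im ^ 2 / (r - b) ^ 2 ≤ 1}
      = L '' {z : ℂ | ‖z‖ ≤ 1} := by
    ext z
    constructor
    · intro hz
      refine ⟨⟨z.re / (r + b), z.im / (r - b)⟩, ?_, ?_⟩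
      · have : ‖(⟨z.re / (r + b), z.im / (r - b)⟩ : ℂ)‖ ^ 2 ≤ 1 := by
          rw [← Complex.normSq_eq_norm_sq, Complex.normSq_apply]
          simp only [← pow_two, div_pow]
          exact hz
        exact (sq_le_one_iff₀ (norm_nonneg _)).1 this
      · apply Complex.ext
        · rw [hre]; field_simp
        · rw [him]; field_simp
    · rintro ⟨w, hw, rfl⟩
      have : ‖w‖ ^ 2 ≤ 1 := (sq_le_one_iff₀ (norm_nonneg _)).2 hw
      rw [← Complex.normSq_eq_norm_sq, Complex.normSq_apply] at this
      show _ / _ + _ / _ ≤ (1:ℝ)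
      rw [hre, him, mul_pow, mul_pow, mul_div_cancel_left₀ _ (by positivity),
        mul_div_cancel_left₀ _ (by positivity)]
      linarith
  have hinj : Function.Injective L := by
    intro z w h
    apply Complex.ext
    · have := congrArg Complex.re h
      rw [hre, hre] at this
      exact mul_left_cancel₀ h1.ne' this
    · have := congrArg Complex.im h
      rw [him, him] at this
      exact mul_left_cancel₀ h2.ne' this
  have hms : MeasurableSet {z : ℂ | ‖z‖ ≤ 1} := measurableSet_le (by fun_prop) (by fun_prop)
  rw [himg, integral_image_eq_integral_abs_det_fderiv_smul volume hms
    (fun x _ => L.hasFDerivAt.hasFDerivWithinAt) hinj.injOn]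
  rw [hdet, abs_of_pos (by nlinarith), integral_smul, Complex.real_smul]
  congr 1
  rw [← integral_indicator hms, ← Complex.integral_comp_polarCoord_symm, polarCoord_target]
  have hm2 : MeasurableSet (Set.Ioi (0:ℝ) ×ˢ Set.Ioo (-Real.pi) Real.pi) :=
    measurableSet_Ioi.prod measurableSet_Ioo
  have hm3 : MeasurableSet (Set.Ioc (0:ℝ) 1 ×ˢ Set.Ioo (-Real.pi) Real.pi) :=
    measurableSet_Ioc.prod measurableSet_Ioo
  rw [← integral_indicator hm2, ← integral_indicator hm3]
  congr 1
  ext ⟨t, θ⟩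
  have hLp : L (Complex.polarCoord.symm (t, θ)) =
      t * (((r + b) * Real.cos θ : ℝ) + Complex.I * ((r - b) * Real.sin θ : ℝ)) := by
    apply Complex.ext
    · rw [hre, Complex.polarCoord_symm_apply]
      simp [← Complex.ofReal_cos, ← Complex.ofReal_sin, -Complex.ofReal_add, -Complex.ofReal_sub]; ring
    · rw [him, Complex.polarCoord_symm_apply]
      simp [← Complex.ofReal_cos, ← Complex.ofReal_sin, -Complex.ofReal_add, -Complex.ofReal_sub]; ring
  by_cases h0 : 0 < t
  · by_cases hθ : θ ∈ Set.Ioo (-Real.pi) Real.pi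
    · rw [Set.indicator_of_mem (show (t, θ) ∈ Set.Ioi (0:ℝ) ×ˢ Set.Ioo (-Real.pi) Real.pi from ⟨h0, hθ⟩)]
      have hn : ‖Complex.polarCoord.symm (t, θ)‖ = t := by
        rw [Complex.norm_polarCoord_symm, abs_of_pos h0]
      by_cases ht1 : t ≤ 1
      · rw [Set.indicator_of_mem (show Complex.polarCoord.symm (t, θ) ∈ {z : ℂ | ‖z‖ ≤ 1} from
            hn.le.trans ht1), Set.indicator_of_mem (show (t, θ) ∈ Set.Ioc (0:ℝ) 1 ×ˢ Set.Ioo (-Real.pi) Real.pi from ⟨⟨h0, ht1⟩, hθ⟩), hLp, Complex.real_smul]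
      · rw [Set.indicator_of_notMem (show Complex.polarCoord.symm (t, θ) ∉ {z : ℂ | ‖z‖ ≤ 1} from
            fun h => ht1 (hn.ge.trans h)), Set.indicator_of_notMem (fun h => ht1 h.1.2), smul_zero]
    · rw [Set.indicator_of_notMem (fun h => hθ h.2), Set.indicator_of_notMem (fun h => hθ h.2)]
  · rw [Set.indicator_of_notMem (fun h => h0 h.1), Set.indicator_of_notMem (fun h => h0 h.1.1)]


/-- For the closed ellipse `D` with boundary
`γ(θ) = (r+b)cos θ + i(r−b)sin θ` and any `f` holomorphic on an open set containing
`D`, the area integral of `f` over `D` equals the contour integral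
`(1/(2i)) ∫₀^{2π} f(γ(θ))·conj(γ(θ))·γ′(θ) dθ`. -/
theorem stmt_11 (r b : ℝ) (hb : 0 < b) (hbr : b < r)
    (D : Set ℂ)
    (hD : D = {z : ℂ | z.re ^ 2 / (r + b) ^ 2 + z.im ^ 2 / (r - b) ^ 2 ≤ 1})
    (γ : ℝ → ℂ)
    (hγ : ∀ θ : ℝ, γ θ = ((r + b) * Real.cos θ : ℝ) + Complex.I * ((r - b) * Real.sin θ : ℝ))
    (f : ℂ → ℂ) (U : Set ℂ) (hU : IsOpen U) (hDU : D ⊆ U)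
    (hf : DifferentiableOn ℂ f U) :
    ∫ z in D, f z
      = (1 / (2 * Complex.I)) * ∫ θ in (0 : ℝ)..(2 * Real.pi),
          f (γ θ) * (starRingEnd ℂ) (γ θ) * deriv γ θ := by
  have h1 : 0 < r + b := by linarith
  have h2 : 0 < r - b := by linarith
  let γ' : ℝ → ℂ := fun θ =>
    ((r + b) * (-Real.sin θ) : ℝ) + Complex.I * ((r - b) * Real.cos θ : ℝ)
  have hγe : γ = fun θ => (((r + b) * Real.cos θ : ℝ) : ℂ)
      + Complex.I * ((r - b) * Real.sin θ : ℝ) := funext hγ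
  have hder : ∀ θ, HasDerivAt γ (γ' θ) θ := by
    intro θ
    rw [hγe]
    exact (((Real.hasDerivAt_cos θ).const_mul (r + b)).ofReal_comp).add
      ((((Real.hasDerivAt_sin θ).const_mul (r - b)).ofReal_comp).const_mul Complex.I)
  have hdγ : deriv γ = γ' := funext fun θ => (hder θ).deriv
  have hγ'c : Continuous γ' := by fun_prop
  have hm : ∀ t : ℝ, 0 ≤ t → t ≤ 1 → ∀ θ, (t : ℂ) * γ θ ∈ U := by
    intro t ht0 ht1 θ
    apply hDU
    rw [hD]
    have e1 : ((t : ℂ) * γ θ).re = t * ((r + b) * Real.cos θ) := by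
      rw [hγ, Complex.re_ofReal_mul, Complex.add_re, Complex.ofReal_re, Complex.re_mul_ofReal]
      simp
    have e2 : ((t : ℂ) * γ θ).im = t * ((r - b) * Real.sin θ) := by
      rw [hγ, Complex.im_ofReal_mul, Complex.add_im, Complex.ofReal_im, Complex.im_mul_ofReal]
      simp
    show _ / _ + _ / _ ≤ (1:ℝ)
    rw [e1, e2]
    have : (t * ((r + b) * Real.cos θ)) ^ 2 / (r + b) ^ 2
        + (t * ((r - b) * Real.sin θ)) ^ 2 / (r - b) ^ 2 = t ^ 2 := by
      field_simp
      linear_combination t ^ 2 * Real.sin_sq_add_cos_sq θ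
    rw [this]
    nlinarith
  have hp : γ (-Real.pi) = γ Real.pi := by rw [hγ, hγ]; simp
  have hc : ∀ θ, γ' θ * (starRingEnd ℂ) (γ θ) - γ θ * (starRingEnd ℂ) (γ' θ)
      = 2 * Complex.I * ((r ^ 2 - b ^ 2 : ℝ) : ℂ) := by
    intro θ
    have hs : (Real.sin θ : ℂ) ^ 2 + (Real.cos θ : ℂ) ^ 2 = 1 := by
      exact_mod_cast Real.sin_sq_add_cos_sq θ
    rw [hγ]
    simp only [γ', map_add, map_mul, Complex.conj_ofReal, Complex.conj_I]
    push_cast at hs ⊢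
    linear_combination (2 * Complex.I * ((r:ℂ) ^ 2 - (b:ℂ) ^ 2)) * hs
  have key := greenA f U hU hf γ γ' hder hγ'c (-Real.pi) Real.pi (by linarith [Real.pi_pos]) hp _ hc hm
  have hper : Function.Periodic (fun θ => f (γ θ) * (starRingEnd ℂ) (γ θ) * γ' θ)
      (2 * Real.pi) := by
    intro θ
    simp only [hγ, γ', Real.cos_add_two_pi, Real.sin_add_two_pi]
  have hshift := hper.intervalIntegral_add_eq 0 (-Real.pi)
  rw [zero_add, show -Real.pi + 2 * Real.pi = Real.pi by ring] at hshift
  rw [hdγ, hshift, key, hD, areaB r b hb hbr f]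
  simp only [hγ]
  have := Complex.I_ne_zero
  field_simp
end

section
/- Let r > 0 and let a₂ be a real number with a₂ > r/2. Then the map h(w) = r·w + a₂·w^(−2) is not injective on the unit circle: there exists θ ∈ (0, π) with h(e^{iθ}) = h(e^{−iθ}) while e^{iθ} ≠ e^{−iθ}. (Hence the degree-2 polynomial curve parametrized by h fails to be a simple curve when a₂ > r/2.) -/
/-- For real `a₂ > r/2 > 0`, the degree-2 parametrization
`h(w) = r·w + a₂·w^(−2)` is not injective on the unit circle: there is `θ ∈ (0, π)`
with `h(e^{iθ}) = h(e^{−iθ})` while `e^{iθ} ≠ e^{−iθ}`. -/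
theorem stmt_15 (r a₂ : ℝ) (hr : 0 < r) (ha : r / 2 < a₂) :
    ∃ θ ∈ Set.Ioo (0 : ℝ) Real.pi,
      ((r : ℂ) * Complex.exp ((θ : ℂ) * Complex.I)
          + (a₂ : ℂ) * (Complex.exp ((θ : ℂ) * Complex.I)) ^ (-2 : ℤ)
        = (r : ℂ) * Complex.exp (-(θ : ℂ) * Complex.I)
          + (a₂ : ℂ) * (Complex.exp (-(θ : ℂ) * Complex.I)) ^ (-2 : ℤ)) ∧
      Complex.exp ((θ : ℂ) * Complex.I) ≠ Complex.exp (-(θ : ℂ) * Complex.I) := by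
  have ha0 : 0 < a₂ := by linarith
  have h0 : 0 < r / (2 * a₂) := by positivity
  have h1 : r / (2 * a₂) < 1 := by
    rw [div_lt_one (by positivity)]; linarith
  have hcos : Real.cos (Real.arccos (r / (2 * a₂))) = r / (2 * a₂) :=
    Real.cos_arccos (by linarith) h1.le
  have hpos : 0 < Real.arccos (r / (2 * a₂)) := Real.arccos_pos.2 h1
  have hlt : Real.arccos (r / (2 * a₂)) < Real.pi := by
    have := Real.arccos_lt_pi_div_two.2 h0
    linarith [Real.pi_pos]
  generalize Real.arccos (r / (2 * a₂)) = θ at hcos hpos hlt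
  have hsin : 0 < Real.sin θ := Real.sin_pos_of_pos_of_lt_pi hpos hlt
  have hc : a₂ * (2 * Real.cos θ) = r := by rw [hcos]; field_simp
  have hc' : (a₂ : ℂ) * (2 * Complex.cos θ) = r := by
    rw [← Complex.ofReal_cos]; exact_mod_cast hc
  rw [Complex.two_cos] at hc'
  refine ⟨θ, ⟨hpos, hlt⟩, ?_, ?_⟩
  · have e : Complex.exp (-(θ : ℂ) * Complex.I) = (Complex.exp ((θ : ℂ) * Complex.I))⁻¹ := by
      rw [← Complex.exp_neg, neg_mul]
    rw [e] at hc' ⊢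
    have hz := Complex.exp_ne_zero ((θ : ℂ) * Complex.I)
    generalize Complex.exp ((θ : ℂ) * Complex.I) = z at *
    rw [inv_zpow', zpow_neg, ← inv_zpow, neg_neg, zpow_ofNat, zpow_ofNat]
    linear_combination (-(z - z⁻¹)) * hc'
  · intro h
    have h2 := congrArg Complex.im h
    rw [← Complex.ofReal_neg, Complex.exp_ofReal_mul_I_im, Complex.exp_ofReal_mul_I_im,
      Real.sin_neg] at h2
    linarith
end
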